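/- arXiv:cs/0612064 — 6 statements merged into one kernel-verified Lean document; each statement's English description precedes it below -/
import Mathlib

section
/- The key appearance equivocation is bounded on both sides in terms of the total probability of messages with nontrivial stabilizer: log(2) · Σ_{m^L : St(m^L) ≠ {id}} P(m^L) ≤ H(K | M^L C^L) ≤ log(|K|) · Σ_{m^L : St(m^L) ≠ {id}} P(m^L). -/
open scoped Classical

noncomputable section

/-- Probability of a word under the i.i.d. extension of the symbol distribution `P`. -/
def wordP {M : Type*} (P : M → ℝ) {L : ℕ} (m : Fin L → M) : ℝ := ∏ l, P (m l)

/-- Number of keys in `K` mapping the message `m` (letterwise) to the cryptogram `c`. -/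
def keyCount {M : Type*} (K : Subgroup (Equiv.Perm M)) {L : ℕ} (m c : Fin L → M) : ℕ :=
  Nat.card {k : Equiv.Perm M // k ∈ K ∧ ∀ l, k (m l) = c l}

/-- The key appearance equivocation `H(K | M^L C^L)` for the substitution cipher with
key space `K` (keys uniform), symbol distribution `P` and message length `L`. -/
def kae {M : Type*} [Fintype M] (K : Subgroup (Equiv.Perm M)) (P : M → ℝ) (L : ℕ) : ℝ :=
  ∑ m : Fin L → M, ∑ c : Fin L → M,
    wordP P m * (keyCount K m c : ℝ) / (Nat.card K : ℝ) * Real.log (keyCount K m c)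

/-- The fixed set `F(π)` of a permutation. -/
def fixedSet {M : Type*} [Fintype M] [DecidableEq M] (π : Equiv.Perm M) : Finset M :=
  Finset.univ.filter fun j => π j = j

/-- `P_π`: total probability of the fixed set of `π`. -/
def Pfix {M : Type*} [Fintype M] [DecidableEq M] (P : M → ℝ) (π : Equiv.Perm M) : ℝ :=
  ∑ j ∈ fixedSet π, P j

/-- A key is maximal if it is a non-identity element of `K` whose fixed set is maximal
under inclusion among fixed sets of non-identity elements of `K`. -/
def IsMaximalKey {M : Type*} [Fintype M] [DecidableEq M] (K : Subgroup (Equiv.Perm M))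
    (π : Equiv.Perm M) : Prop :=
  π ∈ K ∧ π ≠ 1 ∧ ∀ τ ∈ K, τ ≠ 1 → fixedSet π ⊆ fixedSet τ → fixedSet τ = fixedSet π

/-- The stabilizer of the message `m` in `K` is nontrivial. -/
def hasNontrivialStab {M : Type*} (K : Subgroup (Equiv.Perm M)) {L : ℕ} (m : Fin L → M) : Prop :=
  ∃ k ∈ K, k ≠ 1 ∧ ∀ l, k (m l) = m l

/-- Total probability of length-`L` messages with a nontrivial stabilizer in `K`. -/
def probNontrivial {M : Type*} [Fintype M] (K : Subgroup (Equiv.Perm M)) (P : M → ℝ)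
    (L : ℕ) : ℝ :=
  ∑ m : Fin L → M, if hasNontrivialStab K m then wordP P m else 0

lemma keyCount_eq {M : Type*} (K : Subgroup (Equiv.Perm M)) {L : ℕ} (m c : Fin L → M) :
    keyCount K m c = 0 ∨ keyCount K m c = keyCount K m m := by
  by_cases h : ∃ k ∈ K, ∀ l, k (m l) = c l
  · right
    obtain ⟨k, hk, hc⟩ := h
    unfold keyCount
    refine Nat.card_congr ⟨fun x => ⟨k⁻¹ * x.1, K.mul_mem (K.inv_mem hk) x.2.1, fun l => ?_⟩,
      fun x => ⟨k * x.1, K.mul_mem hk x.2.1, fun l => ?_⟩, fun x => ?_, fun x => ?_⟩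
    · rw [Equiv.Perm.mul_apply, x.2.2 l, ← hc l]; simp
    · rw [Equiv.Perm.mul_apply, x.2.2 l, hc l]
    · ext1; simp
    · ext1; simp
  · left
    unfold keyCount
    have : IsEmpty {k : Equiv.Perm M // k ∈ K ∧ ∀ l, k (m l) = c l} :=
      ⟨fun x => h ⟨x.1, x.2.1, x.2.2⟩⟩
    exact Nat.card_of_isEmpty

lemma sum_keyCount {M : Type*} [Fintype M] (K : Subgroup (Equiv.Perm M)) {L : ℕ}
    (m : Fin L → M) : ∑ c : Fin L → M, keyCount K m c = Nat.card K := by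
  unfold keyCount
  rw [← Nat.card_sigma]
  refine Nat.card_congr ⟨fun x => ⟨x.2.1, x.2.2.1⟩,
    fun k => ⟨fun l => k.1 (m l), k.1, k.2, fun l => rfl⟩, ?_, fun x => rfl⟩
  rintro ⟨c, k, hk, hc⟩
  obtain rfl : (fun l => k (m l)) = c := funext hc
  rfl

lemma kae_inner_sum {M : Type*} [Fintype M] (K : Subgroup (Equiv.Perm M)) (P : M → ℝ) {L : ℕ}
    (m : Fin L → M) : ∑ c : Fin L → M,
      wordP P m * (keyCount K m c : ℝ) / (Nat.card K : ℝ) * Real.log (keyCount K m c)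
      = wordP P m * Real.log (keyCount K m m) := by
  have h1 : ∀ c : Fin L → M,
      wordP P m * (keyCount K m c : ℝ) / (Nat.card K : ℝ) * Real.log (keyCount K m c)
      = (wordP P m / (Nat.card K : ℝ) * Real.log (keyCount K m m)) * (keyCount K m c : ℝ) := by
    intro c
    rcases keyCount_eq K m c with h | h
    · simp [h]
    · rw [h]; ring
  have h0 : (Nat.card K : ℝ) ≠ 0 := by exact_mod_cast Nat.card_pos.ne'
  rw [Finset.sum_congr rfl fun c _ => h1 c, ← Finset.mul_sum, ← Nat.cast_sum, sum_keyCount]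
  field_simp

lemma keyCount_le {M : Type*} [Fintype M] (K : Subgroup (Equiv.Perm M)) {L : ℕ}
    (m : Fin L → M) : keyCount K m m ≤ Nat.card K := by
  rw [← sum_keyCount K m]
  exact Finset.single_le_sum (f := fun c => keyCount K m c) (fun _ _ => Nat.zero_le _)
    (Finset.mem_univ m)

lemma two_le_keyCount {M : Type*} [Fintype M] (K : Subgroup (Equiv.Perm M)) {L : ℕ}
    (m : Fin L → M) (h : hasNontrivialStab K m) : 2 ≤ keyCount K m m := by
  obtain ⟨k, hk, h1, hf⟩ := h
  have : Nontrivial {k : Equiv.Perm M // k ∈ K ∧ ∀ l, k (m l) = m l} :=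
    ⟨⟨k, hk, hf⟩, ⟨1, K.one_mem, fun _ => rfl⟩, fun e => h1 (congrArg Subtype.val e)⟩
  exact Finite.one_lt_card

lemma keyCount_eq_one {M : Type*} (K : Subgroup (Equiv.Perm M)) {L : ℕ}
    (m : Fin L → M) (h : ¬ hasNontrivialStab K m) : keyCount K m m = 1 := by
  unfold keyCount
  rw [Nat.card_eq_one_iff_unique]
  refine ⟨⟨fun a b => ?_⟩, ⟨⟨1, K.one_mem, fun _ => rfl⟩⟩⟩
  have key : ∀ x : {k : Equiv.Perm M // k ∈ K ∧ ∀ l, k (m l) = m l}, x.1 = 1 := fun x => by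
    by_contra hx
    exact h ⟨x.1, x.2.1, hx, x.2.2⟩
  exact Subtype.ext ((key a).trans (key b).symm)

/-- `log 2 · Σ_{m : St(m) ≠ {id}} P(m) ≤ H(K | M^L C^L) ≤ log|K| · Σ_{m : St(m) ≠ {id}} P(m)`. -/
theorem kae_bounds_probNontrivial {M : Type*} [Fintype M] [DecidableEq M]
    (K : Subgroup (Equiv.Perm M)) (P : M → ℝ)
    (hP : ∀ x, 0 ≤ P x) (hsum : ∑ x, P x = 1) (L : ℕ) :
    Real.log 2 * probNontrivial K P L ≤ kae K P L ∧
      kae K P L ≤ Real.log (Nat.card K) * probNontrivial K P L := by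
  have hw : ∀ m : Fin L → M, 0 ≤ wordP P m := fun m => Finset.prod_nonneg fun l _ => hP _
  unfold kae probNontrivial
  simp only [kae_inner_sum]
  rw [Finset.mul_sum, Finset.mul_sum]
  constructor
  · refine Finset.sum_le_sum fun m _ => ?_
    split_ifs with h
    · rw [mul_comm]
      refine mul_le_mul_of_nonneg_left (Real.log_le_log (by norm_num) ?_) (hw m)
      exact_mod_cast two_le_keyCount K m h
    · simp [keyCount_eq_one K m h]
  · refine Finset.sum_le_sum fun m _ => ?_
    split_ifs with h
    · rw [mul_comm (Real.log _)]
      refine mul_le_mul_of_nonneg_left (Real.log_le_log ?_ ?_) (hw m)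
      · have := two_le_keyCount K m h
        exact_mod_cast (by omega : 0 < keyCount K m m)
      · exact_mod_cast keyCount_le K m
    · simp [keyCount_eq_one K m h]
end
end

section
/- The total probability of messages with nontrivial stabilizer is bounded above via the maximal keys: Σ_{m^L : St(m^L) ≠ {id}} P(m^L) ≤ Σ_{τ ∈ K_max} (P_τ)^L ≤ |K_max| · R^L, where R = max{P_τ : τ ∈ K_max} (assuming K_max is nonempty). -/
open scoped Classical

noncomputable section

/-- `Σ_{m : St(m) ≠ {id}} P(m) ≤ Σ_{τ ∈ K_max} (P_τ)^L ≤ |K_max| · R^L`. -/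
theorem probNontrivial_le_sum_maximal {M : Type*} [Fintype M] [DecidableEq M]
    (K : Subgroup (Equiv.Perm M)) (P : M → ℝ)
    (hP : ∀ x, 0 ≤ P x) (hsum : ∑ x, P x = 1) (L : ℕ) (R : ℝ)
    (hmax : ∀ τ, IsMaximalKey K τ → Pfix P τ ≤ R)
    (hex : ∃ τ, IsMaximalKey K τ ∧ Pfix P τ = R) :
    probNontrivial K P L ≤
        (∑ τ ∈ Finset.univ.filter (IsMaximalKey K), (Pfix P τ) ^ L) ∧
      (∑ τ ∈ Finset.univ.filter (IsMaximalKey K), (Pfix P τ) ^ L) ≤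
        (Finset.univ.filter (IsMaximalKey K)).card * R ^ L := by
  have hnn : ∀ τ, 0 ≤ Pfix P τ := fun τ => Finset.sum_nonneg fun j _ => hP j
  have hw : ∀ m : Fin L → M, 0 ≤ wordP P m := fun m => Finset.prod_nonneg fun l _ => hP _
  constructor
  · have hpow : ∀ τ : Equiv.Perm M, (Pfix P τ) ^ L =
        ∑ m : Fin L → M, if (∀ l, τ (m l) = m l) then wordP P m else 0 := by
      intro τ
      have h := Finset.prod_univ_sum (fun _ : Fin L => fixedSet τ) (fun _ j => P j)
      rw [Finset.prod_const, Finset.card_univ, Fintype.card_fin] at h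
      unfold Pfix
      rw [h, ← Finset.sum_filter]
      refine Finset.sum_congr ?_ fun _ _ => rfl
      ext m
      simp [fixedSet]
    simp_rw [hpow]
    rw [Finset.sum_comm]
    unfold probNontrivial
    refine Finset.sum_le_sum fun m _ => ?_
    have hterm : ∀ τ ∈ Finset.univ.filter (IsMaximalKey K),
        0 ≤ (if (∀ l, τ (m l) = m l) then wordP P m else 0) := by
      intro τ _
      split_ifs
      · exact hw m
      · exact le_rfl
    split_ifs with hm
    · obtain ⟨k, hk, hk1, hkm⟩ := hm
      obtain ⟨τ, hτ, hτmax⟩ := Finset.exists_max_image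
        (Finset.univ.filter fun τ : Equiv.Perm M =>
          τ ∈ K ∧ τ ≠ 1 ∧ ∀ l, τ (m l) = m l) (fun τ => (fixedSet τ).card)
        ⟨k, by simpa using ⟨hk, hk1, hkm⟩⟩
      simp only [Finset.mem_filter, Finset.mem_univ, true_and] at hτ hτmax
      obtain ⟨h1, h2, h3⟩ := hτ
      have hM : IsMaximalKey K τ := by
        refine ⟨h1, h2, fun σ hσ hσ1 hsub => ?_⟩
        refine (Finset.eq_of_subset_of_card_le hsub (hτmax σ ⟨hσ, hσ1, fun l => ?_⟩)).symm
        have : m l ∈ fixedSet τ := by simp [fixedSet, h3 l]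
        simpa [fixedSet] using hsub this
      have := Finset.single_le_sum hterm (Finset.mem_filter.2 ⟨Finset.mem_univ τ, hM⟩)
      rwa [if_pos h3] at this
    · exact Finset.sum_nonneg hterm
  · rw [← nsmul_eq_mul]
    refine Finset.sum_le_card_nsmul _ _ _ fun τ hτ => ?_
    exact pow_le_pow_left₀ (hnn τ) (hmax τ (Finset.mem_filter.1 hτ).2) L
end
end

section
/- Let M be a finite set with |M| = N ≥ 2, let P_M be a probability distribution on M, and let the key space be K = Sym(M). Then the maximum of P_π = Σ_{j ∈ F(π)} P_M(j) over the maximal keys π ∈ K_max equals 1 minus the sum of the two smallest symbol probabilities: max{P_π : π ∈ K_max} = 1 − min_{i ≠ j} (P_M(i) + P_M(j)). In particular, if P_M(1) ≥ P_M(2) ≥ … ≥ P_M(N), this maximum equals 1 − P_M(N) − P_M(N−1) = Σ_{j=1}^{N−2} P_M(j). -/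
open scoped Classical

noncomputable section

/-- For `K = Sym(M)`, the maximum of `P_π` over maximal keys equals
`1 - min_{i ≠ j} (P i + P j)`. -/
theorem max_Pfix_symmetric_group {M : Type*} [Fintype M] [DecidableEq M]
    (hN : 2 ≤ Fintype.card M) (P : M → ℝ)
    (hP : ∀ x, 0 ≤ P x) (hsum : ∑ x, P x = 1) :
    ∃ c : ℝ, IsLeast {y : ℝ | ∃ i j : M, i ≠ j ∧ P i + P j = y} c ∧
      IsGreatest {x : ℝ | ∃ π : Equiv.Perm M,
        IsMaximalKey (⊤ : Subgroup (Equiv.Perm M)) π ∧ Pfix P π = x} (1 - c) := by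
  have hfix : ∀ (π : Equiv.Perm M) (k : M), k ∈ fixedSet π ↔ π k = k := by
    intro π k
    simp [fixedSet]
  have hpair : ∀ i j : M, i ≠ j →
      ∑ k ∈ (Finset.univ \ {i, j} : Finset M), P k = 1 - (P i + P j) := by
    intro i j hij
    have h := Finset.sum_sdiff (f := P) (Finset.subset_univ ({i, j} : Finset M))
    rw [Finset.sum_pair hij, hsum] at h
    linarith
  have hmoved : ∀ τ : Equiv.Perm M, τ ≠ 1 → ∃ a, τ a ≠ a ∧ τ (τ a) ≠ τ a := by
    intro τ hτ
    by_contra! hc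
    apply hτ
    ext a
    by_contra ha
    exact ha (τ.injective (hc a ha))
  -- the minimum exists
  obtain ⟨i₀, j₀, hij₀⟩ := Fintype.exists_pair_of_one_lt_card (α := M) (by omega)
  obtain ⟨p, hp, hmin⟩ := Finset.exists_min_image
    (Finset.univ.filter fun q : M × M => q.1 ≠ q.2) (fun q => P q.1 + P q.2)
    ⟨(i₀, j₀), by simpa using hij₀⟩
  obtain ⟨i, j⟩ := p
  have hij : i ≠ j := by simpa using hp
  have hmin' : ∀ a b : M, a ≠ b → P i + P j ≤ P a + P b := by
    intro a b hab
    exact hmin (a, b) (by simpa using hab)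
  refine ⟨P i + P j, ⟨⟨i, j, hij, rfl⟩, ?_⟩, ⟨Equiv.swap i j, ⟨Subgroup.mem_top _, ?_, ?_⟩, ?_⟩, ?_⟩
  · rintro y ⟨a, b, hab, rfl⟩
    exact hmin' a b hab
  · intro h
    exact hij (Equiv.swap_eq_one_iff.mp h)
  · intro τ _ hτ hsub
    obtain ⟨a, ha, hb⟩ := hmoved τ hτ
    have hm : ∀ k, τ k ≠ k → k = i ∨ k = j := by
      intro k hk
      by_contra! hc
      exact hk ((hfix τ k).1 (hsub ((hfix _ k).2 (Equiv.swap_apply_of_ne_of_ne hc.1 hc.2))))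
    refine Finset.Subset.antisymm ?_ hsub
    intro k hk
    rw [hfix] at hk ⊢
    apply Equiv.swap_apply_of_ne_of_ne
    · rintro rfl
      have h1 := hm a ha
      have h2 := hm _ hb
      grind
    · rintro rfl
      have h1 := hm a ha
      have h2 := hm _ hb
      grind
  · rw [← hpair i j hij, Pfix]
    congr 1
    ext k
    rw [hfix]
    simp only [Finset.mem_sdiff, Finset.mem_univ, true_and, Finset.mem_insert,
      Finset.mem_singleton, not_or]
    constructor
    · intro h
      constructor
      · rintro rfl
        exact hij (by simpa using h.symm)
      · rintro rfl
        exact hij (by simpa using h)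
    · rintro ⟨h1, h2⟩
      exact Equiv.swap_apply_of_ne_of_ne h1 h2
  · rintro x ⟨π, ⟨_, hπ, _⟩, rfl⟩
    obtain ⟨a, ha, hb⟩ := hmoved π hπ
    have h1 := hmin' a (π a) ha.symm
    have h2 : Pfix P π ≤ ∑ k ∈ (Finset.univ \ {a, π a} : Finset M), P k := by
      apply Finset.sum_le_sum_of_subset_of_nonneg
      · intro k hk
        rw [hfix] at hk
        simp only [Finset.mem_sdiff, Finset.mem_univ, true_and, Finset.mem_insert,
          Finset.mem_singleton, not_or]
        constructor
        · rintro rfl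
          exact ha hk
        · rintro rfl
          exact hb hk
      · intro k _ _
        exact hP k
    rw [hpair a (π a) ha.symm] at h2
    linarith
end
end

section
/- (Transposition cipher, maximal keys.) Let M be a finite set with |M| ≥ 2, d ≥ 2, Δ = {1,…,d}, and let K = {T_π : π ∈ Sym(Δ)} be the subgroup of Sym(M^d) of position permutations, where T_π(m_1…m_d) = m_{π(1)}…m_{π(d)}. Then the maximal keys of K are exactly the maps T_π with π a transposition of Δ; consequently |K| = d!, and |K_max| = d(d−1)/2. -/
open scoped Classical

noncomputable section

/-- The group homomorphism sending a permutation of positions to the induced permutation of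
words: `(posHom M d π) m = m ∘ π.symm`; in particular `posHom M d τ⁻¹` is the map
`T_τ : (m_1 … m_d) ↦ (m_{τ(1)} … m_{τ(d)})`, and the range of `posHom M d` is exactly the
group `{T_π : π ∈ Sym({1,…,d})}` of position permutations. -/
def posHom (M : Type*) (d : ℕ) : Equiv.Perm (Fin d) →* Equiv.Perm (Fin d → M) where
  toFun π := Equiv.arrowCongr π (Equiv.refl M)
  map_one' := by ext f i; rfl
  map_mul' := fun π ρ => by ext f i; simp [Equiv.Perm.mul_def]


lemma posHom_app {M : Type*} {d : ℕ} (π : Equiv.Perm (Fin d)) (m : Fin d → M) (i : Fin d) :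
    posHom M d π m i = m (π⁻¹ i) := rfl

lemma inv_app_self_aux {d : ℕ} (π : Equiv.Perm (Fin d)) (i : Fin d) : π⁻¹ (π i) = i :=
  π.symm_apply_apply i

lemma posHom_inj {M : Type*} {d : ℕ} (x y : M) (hxy : x ≠ y) :
    Function.Injective (posHom M d) := by
  intro π ρ h
  have h2 : π⁻¹ = ρ⁻¹ := by
    ext i
    have := congrFun (congrArg (fun e : Equiv.Perm (Fin d → M) =>
      e (fun j => if j = π⁻¹ i then x else y)) h) i
    simp only [posHom_app, if_true] at this
    by_contra hne
    rw [if_neg (fun h => hne (by rw [h]))] at this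
    exact hxy this
  exact inv_injective h2

lemma posHom_key {M : Type*} [Fintype M] [DecidableEq M] {d : ℕ} (x y : M) (hxy : x ≠ y)
    (π : Equiv.Perm (Fin d)) (hπ : π ≠ 1) (a b : Fin d)
    (h : fixedSet (posHom M d (Equiv.swap a b)) ⊆ fixedSet (posHom M d π)) :
    π = Equiv.swap a b := by
  have hfix : ∀ c, c ≠ a → c ≠ b → π c = c := by
    intro c hca hcb
    have h1 : (fun j => if j = c then x else y) ∈ fixedSet (posHom M d (Equiv.swap a b)) := by
      simp only [fixedSet, Finset.mem_filter, Finset.mem_univ, true_and]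
      funext i
      simp only [posHom_app, Equiv.swap_inv]
      have : Equiv.swap a b i = c ↔ i = c := by
        rw [Equiv.swap_apply_def]; grind
      simp only [this]
    have h2 := h h1
    simp only [fixedSet, Finset.mem_filter, Finset.mem_univ, true_and] at h2
    have h3 := congrFun h2 (π c)
    simp only [posHom_app, inv_app_self_aux, if_true] at h3
    by_contra hne
    rw [if_neg hne] at h3
    exact hxy h3
  have hi := π.injective
  have ha : π a = a ∨ π a = b := by
    by_contra! hc
    exact hc.1 (hi (hfix _ hc.1 hc.2))
  have hb : π b = a ∨ π b = b := by
    by_contra! hc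
    exact hc.2 (hi (hfix _ hc.1 hc.2))
  have hne : π a ≠ a ∨ π b ≠ b := by
    by_contra! hc
    apply hπ
    ext i
    by_cases h1 : i = a
    · rw [h1, hc.1]; rfl
    by_cases h2 : i = b
    · rw [h2, hc.2]; rfl
    rw [hfix i h1 h2]; rfl
  have hab : a ≠ b := by rintro rfl; grind
  have e1 : π a = b := by
    rcases ha with h1 | h1
    · rcases hb with h2 | h2
      · exact absurd (hi (h1.trans h2.symm)) hab
      · grind
    · exact h1
  have e2 : π b = a := by
    rcases hb with h2 | h2
    · exact h2
    · exact absurd (hi (e1.trans h2.symm)) hab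
  apply Equiv.ext
  intro i
  rw [Equiv.swap_apply_def]
  grind

lemma posHom_sub {M : Type*} [Fintype M] [DecidableEq M] {d : ℕ}
    (π : Equiv.Perm (Fin d)) (a : Fin d) :
    fixedSet (posHom M d π) ⊆ fixedSet (posHom M d (Equiv.swap a (π a))) := by
  intro m hm
  simp only [fixedSet, Finset.mem_filter, Finset.mem_univ, true_and] at hm ⊢
  have h3 := congrFun hm (π a)
  simp only [posHom_app, inv_app_self_aux] at h3
  funext i
  simp only [posHom_app, Equiv.swap_inv]
  rw [Equiv.swap_apply_def]
  grind

lemma maxKey_iff {M : Type*} [Fintype M] [DecidableEq M] {d : ℕ} (x y : M) (hxy : x ≠ y)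
    (σ : Equiv.Perm (Fin d → M)) : IsMaximalKey (posHom M d).range σ ↔
      ∃ τ : Equiv.Perm (Fin d), τ.IsSwap ∧ posHom M d τ = σ := by
  have hinj := posHom_inj (d := d) x y hxy
  constructor
  · rintro ⟨⟨π, rfl⟩, h1, hmax⟩
    have hπ : π ≠ 1 := by rintro rfl; exact h1 (map_one _)
    obtain ⟨a, ha⟩ : ∃ a, π a ≠ a := by
      by_contra! hc
      exact hπ (Equiv.ext hc)
    have hs : Equiv.swap a (π a) ≠ 1 := by
      intro h
      have := Equiv.swap_apply_left a (π a)
      rw [h] at this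
      exact ha this.symm
    have := hmax (posHom M d (Equiv.swap a (π a))) ⟨_, rfl⟩
      (fun h => hs (hinj (h.trans (map_one _).symm))) (posHom_sub π a)
    exact ⟨π, ⟨a, π a, ha.symm, posHom_key x y hxy π hπ a _ this.subset⟩, rfl⟩
  · rintro ⟨τ, ⟨a, b, hab, rfl⟩, rfl⟩
    refine ⟨⟨_, rfl⟩, ?_, ?_⟩
    · intro h
      have hs := hinj (h.trans (map_one _).symm)
      have := Equiv.swap_apply_left a b
      rw [hs] at this
      exact hab this
    · rintro _ ⟨π, rfl⟩ h1 hsub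
      have hπ : π ≠ 1 := by rintro rfl; exact h1 (map_one _)
      rw [posHom_key x y hxy π hπ a b hsub]

lemma card_swaps (d : ℕ) :
    Nat.card {τ : Equiv.Perm (Fin d) // τ.IsSwap} = d * (d - 1) / 2 := by
  have e : Nat.card {τ : Equiv.Perm (Fin d) // τ.IsSwap} =
      Nat.card {s : Finset (Fin d) // s ∈ Finset.powersetCard 2 Finset.univ} := by
    refine Nat.card_congr (Equiv.ofBijective (fun τ => ⟨τ.1.support, by
      rw [Finset.mem_powersetCard_univ, Equiv.Perm.card_support_eq_two]; exact τ.2⟩) ⟨?_, ?_⟩)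
    · rintro ⟨τ, a, b, hab, rfl⟩ ⟨ρ, a', b', hab', rfl⟩ h
      simp only [Subtype.mk.injEq, Equiv.Perm.support_swap hab,
        Equiv.Perm.support_swap hab'] at h ⊢
      have h1 : a ∈ ({a', b'} : Finset (Fin d)) := h ▸ (by simp)
      have h2 : b ∈ ({a', b'} : Finset (Fin d)) := h ▸ (by simp)
      simp only [Finset.mem_insert, Finset.mem_singleton] at h1 h2
      rcases h1 with rfl | rfl <;> rcases h2 with rfl | rfl
      · exact absurd rfl hab
      · rfl
      · exact Subtype.ext (Equiv.swap_comm _ _)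
      · exact absurd rfl hab
    · rintro ⟨s, hs⟩
      rw [Finset.mem_powersetCard_univ, Finset.card_eq_two] at hs
      obtain ⟨a, b, hab, rfl⟩ := hs
      exact ⟨⟨Equiv.swap a b, a, b, hab, rfl⟩, Subtype.ext (Equiv.Perm.support_swap hab)⟩
  rw [e, Nat.card_eq_fintype_card, Fintype.card_coe, Finset.card_powersetCard,
    Finset.card_univ, Fintype.card_fin, Nat.choose_two_right]

/-- Transposition cipher, maximal keys: the maximal keys of
`K = {T_π : π ∈ Sym({1,…,d})}` are exactly the `T_τ` with `τ` a transposition of positions;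
moreover `|K| = d!` and `|K_max| = d(d-1)/2`. -/
theorem maximal_keys_of_position_permutations {M : Type*} [Fintype M] [DecidableEq M]
    (hM : 2 ≤ Fintype.card M) {d : ℕ} (hd : 2 ≤ d) :
    (∀ σ : Equiv.Perm (Fin d → M), IsMaximalKey (posHom M d).range σ ↔
      ∃ τ : Equiv.Perm (Fin d), τ.IsSwap ∧ ∀ (m : Fin d → M) (i : Fin d), σ m i = m (τ i)) ∧
    Nat.card (posHom M d).range = Nat.factorial d ∧
    Nat.card {σ : Equiv.Perm (Fin d → M) // IsMaximalKey (posHom M d).range σ} =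
      d * (d - 1) / 2 := by
  obtain ⟨x, y, hxy⟩ := Fintype.exists_pair_of_one_lt_card (α := M) (by omega)
  have hinj := posHom_inj (d := d) x y hxy
  refine ⟨?_, ?_, ?_⟩
  · intro σ
    rw [maxKey_iff x y hxy]
    refine exists_congr fun τ => and_congr_right fun hτ => ?_
    obtain ⟨a, b, -, rfl⟩ := hτ
    constructor
    · rintro rfl m i
      rw [posHom_app, Equiv.swap_inv]
    · intro h
      apply Equiv.ext
      intro m
      funext i
      rw [h, posHom_app, Equiv.swap_inv]
  · rw [← Nat.card_congr (MonoidHom.ofInjective hinj).toEquiv, Nat.card_eq_fintype_card,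
      Fintype.card_perm, Fintype.card_fin]
  · rw [← card_swaps d]
    symm
    refine Nat.card_congr (Equiv.ofBijective (fun τ => ⟨posHom M d τ.1,
      (maxKey_iff x y hxy _).2 ⟨τ.1, τ.2, rfl⟩⟩) ⟨?_, ?_⟩)
    · rintro τ ρ h
      exact Subtype.ext (hinj (congrArg Subtype.val h))
    · rintro ⟨σ, hσ⟩
      obtain ⟨τ, h1, h2⟩ := (maxKey_iff x y hxy σ).1 hσ
      exact ⟨⟨τ, h1⟩, Subtype.ext h2⟩
end
end

section
/- (Transposition cipher, equivocation bounds.) Let M be a finite alphabet with |M| ≥ 2 and probability distribution P_M, let d ≥ 2, and consider the alphabet M^d with the product distribution P(m_1…m_d) = ∏ P_M(m_i) and key space K = {T_π : π ∈ Sym({1,…,d})} ≤ Sym(M^d), where T_π(m_1…m_d) = m_{π(1)}…m_{π(d)} and keys are uniform. Set R₃ = Σ_{j ∈ M} P_M(j)². Then for every k ≥ 1, messages of length L = k·d over M (viewed as length-k messages over M^d) satisfy log(2) · R₃^k ≤ H(K | M^{kd} C^{kd}) ≤ log(d!) · (d(d−1)/2) · R₃^k. -/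
open scoped Classical

noncomputable section

lemma tc_sum_keyCount {A : Type*} [Fintype A] (K : Subgroup (Equiv.Perm A)) {L : ℕ}
    (m : Fin L → A) : ∑ c : Fin L → A, keyCount K m c = Nat.card K := by
  have h : ∀ c : Fin L → A, keyCount K m c
      = Fintype.card {κ : K // (fun l => (κ : Equiv.Perm A) (m l)) = c} := by
    intro c
    rw [keyCount, ← Nat.card_eq_fintype_card]
    refine Nat.card_congr ⟨fun x => ⟨⟨x.1, x.2.1⟩, funext x.2.2⟩,
      fun x => ⟨x.1.1, x.1.2, fun l => congrFun x.2 l⟩, fun x => rfl, fun x => rfl⟩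
  simp_rw [h]
  rw [← Fintype.card_sigma, Nat.card_eq_fintype_card]
  exact Fintype.card_congr (Equiv.sigmaFiberEquiv _)

lemma tc_keyCount_eq {A : Type*} [Fintype A] (K : Subgroup (Equiv.Perm A)) {L : ℕ}
    (m c : Fin L → A) (h : keyCount K m c ≠ 0) : keyCount K m c = keyCount K m m := by
  have hne : Nonempty {k : Equiv.Perm A // k ∈ K ∧ ∀ l, k (m l) = c l} := by
    by_contra hcon
    rw [not_nonempty_iff] at hcon
    exact h Nat.card_of_isEmpty
  obtain ⟨g, hg, hgm⟩ := hne
  refine Nat.card_congr ⟨fun x => ⟨g⁻¹ * x.1, K.mul_mem (K.inv_mem hg) x.2.1, fun l => ?_⟩,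
    fun x => ⟨g * x.1, K.mul_mem hg x.2.1, fun l => ?_⟩, fun x => ?_, fun x => ?_⟩
  · rw [Equiv.Perm.mul_apply, x.2.2 l, ← hgm l]; simp
  · rw [Equiv.Perm.mul_apply, x.2.2 l, hgm l]
  · ext; simp
  · ext; simp

lemma tc_kae_eq {A : Type*} [Fintype A] (K : Subgroup (Equiv.Perm A)) (P : A → ℝ) (L : ℕ) :
    kae K P L = ∑ m : Fin L → A, wordP P m * Real.log (keyCount K m m) := by
  unfold kae
  refine Finset.sum_congr rfl fun m _ => ?_
  have hK : (Nat.card K : ℝ) ≠ 0 := by exact_mod_cast Nat.card_pos.ne'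
  have h : ∀ c : Fin L → A,
      wordP P m * (keyCount K m c : ℝ) / (Nat.card K : ℝ) * Real.log (keyCount K m c)
      = (wordP P m / (Nat.card K : ℝ) * Real.log (keyCount K m m)) * (keyCount K m c : ℝ) := by
    intro c
    by_cases h0 : keyCount K m c = 0
    · simp [h0]
    · rw [tc_keyCount_eq K m c h0]; ring
  simp_rw [h]
  rw [← Finset.mul_sum, ← Nat.cast_sum, tc_sum_keyCount]
  field_simp

lemma tc_single {M : Type*} [Fintype M] {d : ℕ} (P : M → ℝ) (hsum : ∑ x, P x = 1)
    (i j : Fin d) (hij : i ≠ j) :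
    ∑ w : Fin d → M, (if w i = w j then ∏ t, P (w t) else 0) = ∑ a, P a ^ 2 := by
  have h1 : ∀ w : Fin d → M, (if w i = w j then ∏ t, P (w t) else 0)
      = ∑ a : M, ∏ t, (P (w t) * if t = i ∨ t = j then (if w t = a then 1 else 0) else 1) := by
    intro w
    rw [Finset.sum_eq_single (w i)]
    · split_ifs with h
      · refine Finset.prod_congr rfl fun t _ => ?_
        split_ifs with h1 h2
        · simp
        · exact absurd (by rcases h1 with rfl | rfl <;> simp [h]) h2
        · simp
      · symm
        apply Finset.prod_eq_zero (Finset.mem_univ j)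
        simp [Ne.symm h]
    · intro a _ ha
      apply Finset.prod_eq_zero (Finset.mem_univ i)
      simp [Ne.symm ha]
    · simp
  simp_rw [h1]
  rw [Finset.sum_comm]
  refine Finset.sum_congr rfl fun a _ => ?_
  have := (Fintype.prod_sum (fun (t : Fin d) (x : M) =>
    P x * if t = i ∨ t = j then (if x = a then (1:ℝ) else 0) else 1)).symm
  rw [this]
  have h2 : ∀ t : Fin d, (∑ x : M, P x * if t = i ∨ t = j then (if x = a then (1:ℝ) else 0) else 1)
      = (if t = i then P a else 1) * (if t = j then P a else 1) := by
    intro t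
    by_cases hi : t = i
    · subst hi; simp [hij]
    · by_cases hj : t = j
      · subst hj; simp [hi]
      · simp [hi, hj, hsum]
  simp_rw [h2]
  rw [Finset.prod_mul_distrib]
  simp [sq]

lemma tc_event {M : Type*} [Fintype M] {d : ℕ} (P : M → ℝ) (hsum : ∑ x, P x = 1)
    (i j : Fin d) (hij : i ≠ j) (k : ℕ) :
    ∑ m : Fin k → Fin d → M, (if ∀ l, m l i = m l j then
      wordP (fun w : Fin d → M => ∏ t, P (w t)) m else 0) = (∑ a, P a ^ 2) ^ k := by
  rw [← tc_single P hsum i j hij, Fintype.sum_pow]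
  refine Finset.sum_congr rfl fun m _ => ?_
  unfold wordP
  split_ifs with h
  · exact Finset.prod_congr rfl fun l _ => by rw [if_pos (h l)]
  · push Not at h
    obtain ⟨l, hl⟩ := h
    exact (Finset.prod_eq_zero (Finset.mem_univ l) (if_neg hl)).symm

lemma tc_posHom_inj {M : Type*} [Nontrivial M] (d : ℕ) : Function.Injective (posHom M d) := by
  rw [injective_iff_map_eq_one]
  intro π h
  obtain ⟨a, b, hab⟩ := exists_pair_ne M
  ext i : 1
  by_contra hne
  have h1 : (posHom M d π) (fun t => if t = i then a else b) (π i)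
      = (fun t => if t = i then a else b) (π i) := by rw [h]; rfl
  have h2 : (posHom M d π) (fun t => if t = i then a else b) (π i) = a := by
    change (fun t => if t = i then a else b) (π.symm (π i)) = a
    simp
  rw [h2] at h1
  simp only [Equiv.Perm.coe_one, id] at hne
  simp [hne] at h1
  exact hab h1

lemma tc_kc_pos {A : Type*} [Fintype A] (K : Subgroup (Equiv.Perm A)) {L : ℕ}
    (m : Fin L → A) : 1 ≤ keyCount K m m := by
  have : Nonempty {k : Equiv.Perm A // k ∈ K ∧ ∀ l, k (m l) = m l} :=
    ⟨⟨1, K.one_mem, fun l => rfl⟩⟩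
  exact Nat.card_pos

lemma tc_kc_le {M : Type*} [Fintype M] {d k : ℕ} (m : Fin k → Fin d → M) :
    keyCount (posHom M d).range m m ≤ d.factorial := by
  calc keyCount (posHom M d).range m m ≤ Nat.card (posHom M d).range :=
        Nat.card_le_card_of_injective (fun x => ⟨x.1, x.2.1⟩)
          (fun x y h => Subtype.ext (by simpa using h))
    _ ≤ Nat.card (Equiv.Perm (Fin d)) :=
        Nat.card_le_card_of_surjective _ (posHom M d).rangeRestrict_surjective
    _ = d.factorial := by rw [Nat.card_eq_fintype_card, Fintype.card_perm, Fintype.card_fin]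

lemma tc_kc_two {M : Type*} [Fintype M] [Nontrivial M] {d k : ℕ} (m : Fin k → Fin d → M)
    (i j : Fin d) (hij : i ≠ j) (h : ∀ l, m l i = m l j) :
    2 ≤ keyCount (posHom M d).range m m := by
  have hne : posHom M d (Equiv.swap i j) ≠ 1 := by
    intro h1
    rw [← map_one (posHom M d)] at h1
    have := tc_posHom_inj d h1
    rw [Equiv.swap_eq_one_iff] at this
    exact hij this
  have : Nontrivial {κ : Equiv.Perm (Fin d → M) //
      κ ∈ (posHom M d).range ∧ ∀ l, κ (m l) = m l} := by
    refine ⟨⟨⟨1, Subgroup.one_mem _, fun l => rfl⟩,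
      ⟨posHom M d (Equiv.swap i j), ⟨_, rfl⟩, fun l => ?_⟩, ?_⟩⟩
    · funext t
      change m l ((Equiv.swap i j).symm t) = m l t
      rw [Equiv.symm_swap, Equiv.swap_apply_def]
      split_ifs with h1 h2
      · rw [h1, h l]
      · rw [h2, h l]
      · rfl
    · intro heq
      exact hne (congrArg Subtype.val heq).symm
  exact Finite.one_lt_card

lemma tc_kc_one {M : Type*} [Fintype M] {d k : ℕ} (m : Fin k → Fin d → M)
    (h : keyCount (posHom M d).range m m ≠ 1) :
    ∃ i j : Fin d, i < j ∧ ∀ l, m l i = m l j := by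
  by_contra hcon
  push Not at hcon
  apply h
  have : Unique {κ : Equiv.Perm (Fin d → M) //
      κ ∈ (posHom M d).range ∧ ∀ l, κ (m l) = m l} := by
    refine ⟨⟨⟨1, Subgroup.one_mem _, fun l => rfl⟩⟩, ?_⟩
    rintro ⟨κ, ⟨π, rfl⟩, hκ⟩
    apply Subtype.ext
    change posHom M d π = 1
    have hπ : π = 1 := by
      ext i : 1
      by_contra hne
      have hm : ∀ l, m l i = m l (π i) := by
        intro l
        have h1 : m l (π.symm (π i)) = m l (π i) := congrFun (hκ l) (π i)
        simpa using h1
      rcases lt_or_gt_of_ne hne with hlt | hlt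
      · obtain ⟨l, hl⟩ := hcon _ _ hlt
        exact hl (hm l).symm
      · obtain ⟨l, hl⟩ := hcon _ _ hlt
        exact hl (hm l)
    rw [hπ, map_one]
  exact Nat.card_unique

lemma tc_pairs (d : ℕ) (x : ℝ) :
    ∑ j : Fin d, ∑ i : Fin d, (if i < j then x else 0) = (d * (d - 1) / 2) * x := by
  have h : ∀ j : Fin d, ∑ i : Fin d, (if i < j then x else 0) = ((j : ℕ) : ℝ) * x := by
    intro j
    rw [← Finset.sum_filter, Finset.sum_const, nsmul_eq_mul]
    congr 2
    rw [← Fin.card_Iio j]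
    congr 1
    ext; simp
  simp_rw [h]
  rw [← Finset.sum_mul, Fin.sum_univ_eq_sum_range (fun n => (n : ℝ)) d]
  congr 1
  clear h
  induction d with
  | zero => simp
  | succ n ih => rw [Finset.sum_range_succ, ih]; push_cast; ring

/-- Transposition cipher, equivocation bounds:
`log 2 · R₃^k ≤ H(K | M^{kd} C^{kd}) ≤ log(d!) · (d(d-1)/2) · R₃^k` with
`R₃ = Σ_{j ∈ M} P(j)²`, where the alphabet is `M^d` with the product distribution and the
key space is the group of position permutations. -/
theorem kae_bounds_transposition_cipher {M : Type*} [Fintype M] [DecidableEq M]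
    (hM : 2 ≤ Fintype.card M) {d : ℕ} (hd : 2 ≤ d)
    (P : M → ℝ) (hP : ∀ x, 0 ≤ P x) (hsum : ∑ x, P x = 1)
    (k : ℕ) (hk : 1 ≤ k) :
    Real.log 2 * (∑ j : M, P j ^ 2) ^ k ≤
        kae (posHom M d).range (fun m : Fin d → M => ∏ i, P (m i)) k ∧
      kae (posHom M d).range (fun m : Fin d → M => ∏ i, P (m i)) k ≤
        Real.log (Nat.factorial d) * (d * (d - 1) / 2) * (∑ j : M, P j ^ 2) ^ k := by
  have : Nontrivial M := Fintype.one_lt_card_iff_nontrivial.mp hM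
  rw [tc_kae_eq]
  have hw : ∀ m : Fin k → Fin d → M, 0 ≤ wordP (fun w : Fin d → M => ∏ i, P (w i)) m :=
    fun m => Finset.prod_nonneg fun l _ => Finset.prod_nonneg fun i _ => hP _
  constructor
  · have hij : (⟨0, by omega⟩ : Fin d) ≠ ⟨1, by omega⟩ := by simp
    rw [← tc_event P hsum _ _ hij k, Finset.mul_sum]
    refine Finset.sum_le_sum fun m _ => ?_
    split_ifs with h
    · rw [mul_comm]
      refine mul_le_mul_of_nonneg_left ?_ (hw m)
      apply Real.log_le_log (by norm_num)
      exact_mod_cast tc_kc_two m _ _ hij h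
    · rw [mul_zero]
      exact mul_nonneg (hw m) (Real.log_natCast_nonneg _)
  · have hlog : 0 ≤ Real.log (Nat.factorial d) := Real.log_natCast_nonneg _
    have key : ∀ m : Fin k → Fin d → M,
        wordP (fun w : Fin d → M => ∏ i, P (w i)) m *
          Real.log (keyCount (posHom M d).range m m) ≤
        Real.log (Nat.factorial d) * ∑ j : Fin d, ∑ i : Fin d, (if i < j then
          (if ∀ l, m l i = m l j then wordP (fun w : Fin d → M => ∏ i, P (w i)) m else 0)
          else 0) := by
      intro m
      have hnn : ∀ j i : Fin d, 0 ≤ (if i < j then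
          (if ∀ l, m l i = m l j then wordP (fun w : Fin d → M => ∏ i, P (w i)) m else 0)
          else 0) := by
        intro j i
        split_ifs
        · exact hw m
        · exact le_rfl
        · exact le_rfl
      by_cases h1 : keyCount (posHom M d).range m m = 1
      · rw [h1]
        simp only [Nat.cast_one, Real.log_one, mul_zero]
        exact mul_nonneg hlog (Finset.sum_nonneg fun j _ => Finset.sum_nonneg fun i _ => hnn j i)
      · obtain ⟨i, j, hij, h⟩ := tc_kc_one m h1
        rw [mul_comm]
        refine mul_le_mul ?_ ?_ (hw m) hlog
        · apply Real.log_le_log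
          · exact_mod_cast tc_kc_pos _ m
          · exact_mod_cast tc_kc_le m
        · refine le_trans ?_ (Finset.single_le_sum
            (fun j _ => Finset.sum_nonneg fun i _ => hnn j i) (Finset.mem_univ j))
          refine le_trans ?_ (Finset.single_le_sum (fun i _ => hnn j i) (Finset.mem_univ i))
          rw [if_pos hij, if_pos h]
    refine (Finset.sum_le_sum fun m _ => key m).trans (le_of_eq ?_)
    rw [← Finset.mul_sum, mul_assoc, ← tc_pairs, Finset.sum_comm]
    congr 1
    refine Finset.sum_congr rfl fun j _ => ?_
    rw [Finset.sum_comm]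
    refine Finset.sum_congr rfl fun i _ => ?_
    by_cases hij : i < j
    · simp only [hij, if_true]
      rw [← tc_event P hsum i j hij.ne k]
      refine Finset.sum_congr rfl fun m _ => ?_
      congr
    · simp [hij]
end
end

section
/- Let F be a finite field with |F| = N ≥ 3, and let K ≤ Sym(F) be the group of affine permutations x ↦ a·x + b with a ≠ 0. Then the maximal keys of K are exactly the affine maps with a ∉ {0, 1}; consequently |K| = N(N−1) and |K_max| = N(N−2). Moreover, for any probability distribution P_M on F, R = max{P_π : π ∈ K_max} = max{P_M(n) : n ∈ F}, where P_π = Σ_{j ∈ F(π)} P_M(j). -/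
open scoped Classical

noncomputable section

def affPerm {F : Type*} [Field F] (a b : F) (ha : a ≠ 0) : Equiv.Perm F where
  toFun x := a * x + b
  invFun y := a⁻¹ * (y - b)
  left_inv x := by field_simp; ring
  right_inv y := by field_simp; ring

theorem card_aff_aux {F : Type*} [Field F] [Fintype F] (p : F → Prop) (hp : ∀ a, p a → a ≠ 0) :
    Nat.card {σ : Equiv.Perm F // ∃ a b : F, p a ∧ ∀ x, σ x = a * x + b} =
      Nat.card {a : F // p a} * Fintype.card F := by
  have e : Function.Bijective (fun q : {a : F // p a} × F =>
      (⟨affPerm q.1.1 q.2 (hp _ q.1.2), q.1.1, q.2, q.1.2, fun x => rfl⟩ :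
        {σ : Equiv.Perm F // ∃ a b : F, p a ∧ ∀ x, σ x = a * x + b})) := by
    constructor
    · rintro ⟨⟨a, ha⟩, b⟩ ⟨⟨c, hc⟩, d⟩ h
      have h1 : affPerm a b (hp _ ha) = affPerm c d (hp _ hc) := congrArg Subtype.val h
      have h2 : ∀ x, a * x + b = c * x + d := fun x => congrFun (congrArg (fun f => f.toFun) h1) x
      have h0 := h2 0
      have h3 := h2 1
      have hb : b = d := by simpa using h0
      have hac : a = c := by subst hb; simpa using h3
      subst hb; subst hac; rfl
    · rintro ⟨σ, a, b, ha, h⟩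
      refine ⟨⟨⟨a, ha⟩, b⟩, ?_⟩
      apply Subtype.ext
      ext x
      exact (h x).symm
  rw [← Nat.card_congr (Equiv.ofBijective _ e), Nat.card_prod, Nat.card_eq_fintype_card (α := F)]

theorem fixedSet_aff {F : Type*} [Field F] [Fintype F] [DecidableEq F] (σ : Equiv.Perm F)
    (a b : F) (ha : a ≠ 1) (h : ∀ x, σ x = a * x + b) : fixedSet σ = {b / (1 - a)} := by
  have h1 : 1 - a ≠ 0 := sub_ne_zero.mpr (Ne.symm ha)
  ext x
  simp only [fixedSet, Finset.mem_filter, Finset.mem_univ, true_and, Finset.mem_singleton, h]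
  rw [eq_div_iff h1]
  constructor <;> intro h2 <;> linear_combination -h2

theorem fixedSet_trans {F : Type*} [Field F] [Fintype F] [DecidableEq F] (σ : Equiv.Perm F)
    (b : F) (hσ : σ ≠ 1) (h : ∀ x, σ x = 1 * x + b) : fixedSet σ = ∅ := by
  ext x
  simp only [fixedSet, Finset.mem_filter, Finset.mem_univ, true_and, Finset.notMem_empty, h,
    iff_false]
  intro h2
  apply hσ
  have hb : b = 0 := by linear_combination h2
  ext y
  simp [h, hb]

theorem maximal_aff {F : Type*} [Field F] [Fintype F] [DecidableEq F]
    (hN : 3 ≤ Fintype.card F) (K : Subgroup (Equiv.Perm F))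
    (hK : ∀ σ : Equiv.Perm F, σ ∈ K ↔ ∃ a b : F, a ≠ 0 ∧ ∀ x, σ x = a * x + b)
    (c : F) (hc0 : c ≠ 0) (hc1 : c ≠ 1) (σ : Equiv.Perm F) : IsMaximalKey K σ ↔
        ∃ a b : F, a ≠ 0 ∧ a ≠ 1 ∧ ∀ x, σ x = a * x + b := by
  have ne1 : ∀ (τ : Equiv.Perm F) (a b : F), a ≠ 1 → (∀ x, τ x = a * x + b) → τ ≠ 1 := by
    rintro τ a b ha h rfl
    have h0 := h 0
    have h1 := h 1
    simp only [Equiv.Perm.one_apply] at h0 h1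
    apply ha
    linear_combination h0 - h1
  constructor
  · rintro ⟨hm, hne, hmax⟩
    obtain ⟨a, b, ha, h⟩ := (hK σ).1 hm
    refine ⟨a, b, ha, ?_, h⟩
    rintro rfl
    have hf := fixedSet_trans σ b hne h
    have hτ : ∀ x, affPerm c 0 hc0 x = c * x + 0 := fun x => rfl
    have := hmax (affPerm c 0 hc0) ((hK _).2 ⟨c, 0, hc0, hτ⟩) (ne1 _ c 0 hc1 hτ)
      (by rw [hf]; exact Finset.empty_subset _)
    rw [hf, fixedSet_aff _ c 0 hc1 hτ] at this
    exact Finset.singleton_ne_empty _ this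
  · rintro ⟨a, b, ha, ha1, h⟩
    refine ⟨(hK σ).2 ⟨a, b, ha, h⟩, ne1 σ a b ha1 h, ?_⟩
    intro τ hτ hτ1 hsub
    obtain ⟨a', b', ha', h'⟩ := (hK τ).1 hτ
    rw [fixedSet_aff σ a b ha1 h] at hsub ⊢
    by_cases h1 : a' = 1
    · subst h1
      rw [fixedSet_trans τ b' hτ1 h'] at hsub
      simp at hsub
    · rw [fixedSet_aff τ a' b' h1 h'] at hsub ⊢
      rw [Finset.singleton_subset_singleton.1 hsub]

/-- For the affine group `K = {x ↦ a·x + b : a ≠ 0}` over a finite field `F`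
with `|F| = N ≥ 3`: the maximal keys are exactly the affine maps with `a ∉ {0,1}`,
`|K| = N(N-1)`, `|K_max| = N(N-2)`, and `max{P_π : π ∈ K_max} = max{P_M(n) : n ∈ F}`. -/
theorem maximal_keys_of_affine_group {F : Type*} [Field F] [Fintype F] [DecidableEq F]
    (hN : 3 ≤ Fintype.card F) (K : Subgroup (Equiv.Perm F))
    (hK : ∀ σ : Equiv.Perm F, σ ∈ K ↔ ∃ a b : F, a ≠ 0 ∧ ∀ x, σ x = a * x + b)
    (P : F → ℝ) (hP : ∀ x, 0 ≤ P x) (hsum : ∑ x, P x = 1) :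
    (∀ σ : Equiv.Perm F, IsMaximalKey K σ ↔
        ∃ a b : F, a ≠ 0 ∧ a ≠ 1 ∧ ∀ x, σ x = a * x + b) ∧
    Nat.card K = Fintype.card F * (Fintype.card F - 1) ∧
    Nat.card {σ : Equiv.Perm F // IsMaximalKey K σ} =
      Fintype.card F * (Fintype.card F - 2) ∧
    ∀ r : ℝ, IsGreatest {x : ℝ | ∃ n : F, P n = x} r →
      IsGreatest {x : ℝ | ∃ π : Equiv.Perm F, IsMaximalKey K π ∧ Pfix P π = x} r := by
  have hex : ∃ c : F, c ∉ ({0, 1} : Finset F) := by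
    by_contra hcon
    push Not at hcon
    have h1 : Fintype.card F ≤ ({0, 1} : Finset F).card :=
      Finset.card_le_card (s := Finset.univ) (fun x _ => hcon x)
    have h2 : ({0, 1} : Finset F).card ≤ 2 := Finset.card_le_two
    omega
  obtain ⟨c, hc⟩ := hex
  have hc0 : c ≠ 0 := by rintro rfl; simp at hc
  have hc1 : c ≠ 1 := by rintro rfl; simp at hc
  have hmax := maximal_aff hN K hK c hc0 hc1
  refine ⟨hmax, ?_, ?_, ?_⟩
  · have e : Nat.card K = Nat.card {σ : Equiv.Perm F // ∃ a b : F, a ≠ 0 ∧ ∀ x, σ x = a * x + b} :=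
      Nat.card_congr (Equiv.subtypeEquivRight hK)
    rw [e, card_aff_aux (fun a => a ≠ 0) (fun a h => h), mul_comm]
    congr 1
    rw [Nat.card_eq_fintype_card, Fintype.card_subtype_compl, Fintype.card_subtype_eq]
  · have e : Nat.card {σ : Equiv.Perm F // IsMaximalKey K σ} =
        Nat.card {σ : Equiv.Perm F // ∃ a b : F, (a ≠ 0 ∧ a ≠ 1) ∧ ∀ x, σ x = a * x + b} :=
      Nat.card_congr (Equiv.subtypeEquivRight (fun σ => by rw [hmax]; simp only [and_assoc]))
    rw [e, card_aff_aux (fun a => a ≠ 0 ∧ a ≠ 1) (fun a h => h.1), mul_comm]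
    congr 1
    have h3 : Nat.card {a : F // a ≠ 0 ∧ a ≠ 1} = (({0, 1} : Finset F)ᶜ).card := by
      rw [Nat.card_eq_fintype_card, Fintype.card_subtype]
      congr 1
      ext x
      simp
    rw [h3, Finset.card_compl, Finset.card_pair zero_ne_one]
  · rintro r ⟨⟨n, hn⟩, hr⟩
    have hc2 : 1 - c ≠ 0 := sub_ne_zero.mpr (Ne.symm hc1)
    constructor
    · have hτ : ∀ x, affPerm c (n * (1 - c)) hc0 x = c * x + n * (1 - c) := fun x => rfl
      refine ⟨affPerm c (n * (1 - c)) hc0, (hmax _).2 ⟨c, _, hc0, hc1, hτ⟩, ?_⟩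
      rw [Pfix, fixedSet_aff _ c _ hc1 hτ, Finset.sum_singleton, mul_div_cancel_right₀ _ hc2, hn]
    · rintro x ⟨π, hπ, rfl⟩
      obtain ⟨a, b, ha, ha1, h⟩ := (hmax π).1 hπ
      rw [Pfix, fixedSet_aff π a b ha1 h, Finset.sum_singleton]
      exact hr ⟨_, rfl⟩
end
end
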